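/- arXiv:1212.5829 — 2 statements merged into one kernel-verified Lean document; each statement's English description precedes it below -/
import Mathlib

section
/- For every λ > 0, p ∈ (0,1], and r ≥ 1, the complementary CDF of the distance ratio R = R₂/R₁ satisfies ∫₀^∞ ∫₀^{r₂/r} p (2πλ)² r₁ r₂ exp(−λπ(1−p) r₁²) exp(−pλπ r₂²) dr₁ dr₂ = 1 / (1 + p(r² − 1)); equivalently, the CDF of R is F_R(r) = 1 − 1/(1 + p(r² − 1)) for r ≥ 1. -/
open MeasureTheory Real Set intervalIntegral

/-!
Write `a = lam π (1 - p) ≥ 0`, `b = p lam π > 0` and `G t = ∫₀^{t/r} s exp (-a s²) ds`. Up to the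
constant `p (2 π lam)²`, the outer integrand is `t exp (-b t²) G t`. Since
`G' t = (t / r²) exp (-a t² / r²)`, integrating by parts gives the antiderivative
`-G t exp (-b t²) / (2b) - exp (-(b + a / r²) t²) / (4b (a + b r²))`,
which vanishes at infinity and equals `-1 / (4b (a + b r²))` at `0`. Working with `G` rather than
its closed form `(1 - exp (-a t² / r²)) / (2a)` avoids treating `a = 0` (that is, `p = 1`)
separately. With the values of `a` and `b` above, `a + b r² = lam π (1 + p (r² - 1))`.
-/

open Filter Topology

/-- The partial Rayleigh moment `∫₀^{t/r} s exp (-a s²) ds`. -/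
noncomputable def innerMoment (a r t : ℝ) : ℝ :=
  ∫ s in (0:ℝ)..(t / r), s * Real.exp (-(a * s ^ 2))

lemma hasDerivAt_innerMoment (a r t : ℝ) :
    HasDerivAt (innerMoment a r) (t / r * Real.exp (-(a * (t / r) ^ 2)) * (1 / r)) t := by
  have hc : Continuous fun s : ℝ => s * Real.exp (-(a * s ^ 2)) := by fun_prop
  have h := (hc.integral_hasStrictDerivAt 0 (t / r)).hasDerivAt
  exact h.comp t ((hasDerivAt_id t).div_const r)

lemma innerMoment_nonneg (a : ℝ) {r t : ℝ} (hr : 0 < r) (ht : 0 ≤ t) :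
    0 ≤ innerMoment a r t := by
  refine intervalIntegral.integral_nonneg (by positivity) fun s hs => ?_
  exact mul_nonneg hs.1 (Real.exp_pos _).le

lemma innerMoment_le {a r t : ℝ} (ha : 0 ≤ a) (hr : 0 < r) (ht : 0 ≤ t) :
    innerMoment a r t ≤ (t / r) ^ 2 := by
  have h0 : 0 ≤ t / r := by positivity
  have h := intervalIntegral.norm_integral_le_of_norm_le_const (a := 0) (b := t / r) (C := t / r)
    (f := fun s : ℝ => s * Real.exp (-(a * s ^ 2))) (fun s hs => by
      rw [uIoc_of_le h0] at hs
      have he : Real.exp (-(a * s ^ 2)) ≤ 1 := Real.exp_le_one_iff.2 (by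
        have : 0 ≤ a * s ^ 2 := by positivity
        linarith)
      rw [Real.norm_eq_abs, abs_of_nonneg (mul_nonneg hs.1.le (Real.exp_pos _).le)]
      exact (mul_le_of_le_one_right hs.1.le he).trans hs.2)
  rw [sub_zero, abs_of_nonneg h0, ← sq] at h
  exact (le_abs_self _).trans h

lemma tendsto_mul_sq_atTop {c : ℝ} (hc : 0 < c) :
    Tendsto (fun t : ℝ => c * t ^ 2) atTop atTop :=
  (tendsto_pow_atTop two_ne_zero).const_mul_atTop hc

lemma tendsto_innerMoment_mul_exp {a b r : ℝ} (ha : 0 ≤ a) (hb : 0 < b) (hr : 0 < r) :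
    Tendsto (fun t => innerMoment a r t * Real.exp (-(b * t ^ 2))) atTop (𝓝 0) := by
  have h := ((Real.tendsto_pow_mul_exp_neg_atTop_nhds_zero 1).comp
    (tendsto_mul_sq_atTop hb)).const_mul (1 / (b * r ^ 2))
  rw [mul_zero] at h
  refine squeeze_zero' ?_ ?_ h
  · filter_upwards [eventually_ge_atTop 0] with t ht
    exact mul_nonneg (innerMoment_nonneg a hr ht) (Real.exp_pos _).le
  · filter_upwards [eventually_ge_atTop 0] with t ht
    refine (mul_le_mul_of_nonneg_right (innerMoment_le ha hr ht) (Real.exp_pos _).le).trans_eq ?_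
    simp only [Function.comp, pow_one]
    field_simp

lemma integral_innerMoment {a b r : ℝ} (ha : 0 ≤ a) (hb : 0 < b) (hr : 0 < r) :
    ∫ t in Ioi (0:ℝ), t * Real.exp (-(b * t ^ 2)) * innerMoment a r t
      = 1 / (4 * b * (a + b * r ^ 2)) := by
  have hD : 0 < a + b * r ^ 2 := by positivity
  have hc : 0 < b + a / r ^ 2 := by positivity
  have hexp (c t : ℝ) : HasDerivAt (fun t : ℝ => Real.exp (-(c * t ^ 2)))
      (Real.exp (-(c * t ^ 2)) * -(c * (2 * t))) t := by
    simpa using (((hasDerivAt_id t).pow 2).const_mul c).neg.exp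
  have hF (t : ℝ) : HasDerivAt
      (fun t => -(innerMoment a r t * Real.exp (-(b * t ^ 2))) / (2 * b)
        - Real.exp (-((b + a / r ^ 2) * t ^ 2)) / (4 * b * (a + b * r ^ 2)))
      (t * Real.exp (-(b * t ^ 2)) * innerMoment a r t) t := by
    refine ((((hasDerivAt_innerMoment a r t).mul (hexp b t)).neg.div_const (2 * b)).sub
      ((hexp (b + a / r ^ 2) t).div_const (4 * b * (a + b * r ^ 2)))).congr_deriv ?_
    have he : Real.exp (-((b + a / r ^ 2) * t ^ 2))
        = Real.exp (-(a * (t / r) ^ 2)) * Real.exp (-(b * t ^ 2)) := by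
      rw [← Real.exp_add]
      congr 1
      field_simp
      ring
    rw [he]
    generalize Real.exp (-(a * (t / r) ^ 2)) = x
    generalize Real.exp (-(b * t ^ 2)) = y
    field_simp
    ring
  have hlim := ((tendsto_innerMoment_mul_exp ha hb hr).neg.div_const (2 * b)).sub
    ((Real.tendsto_exp_neg_atTop_nhds_zero.comp (tendsto_mul_sq_atTop hc)).div_const
      (4 * b * (a + b * r ^ 2)))
  rw [integral_Ioi_of_hasDerivAt_of_nonneg' (fun t _ => hF t) (fun t ht => ?_) hlim]
  · simp [innerMoment]
  · have ht' : 0 < t := ht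
    have := innerMoment_nonneg a hr ht'.le
    positivity

/-- The complementary CDF of the distance ratio `R = R₂ / R₁`:
`P(R > r) = 1 / (1 + p (r² - 1))` for `r ≥ 1`; equivalently the CDF of `R` is
`F_R(r) = 1 - 1/(1 + p (r² - 1))`. -/
theorem ccdf_of_distance_ratio (lam p r : ℝ) (hlam : 0 < lam)
    (hp0 : 0 < p) (hp1 : p ≤ 1) (hr : 1 ≤ r) :
    (∫ r₂ in Set.Ioi (0:ℝ), ∫ r₁ in (0:ℝ)..(r₂ / r),
      p * (2 * π * lam) ^ 2 * r₁ * r₂ * Real.exp (-(lam * π * (1 - p) * r₁ ^ 2)) *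
        Real.exp (-(p * lam * π * r₂ ^ 2))) = 1 / (1 + p * (r ^ 2 - 1)) ∧
    1 - (∫ r₂ in Set.Ioi (0:ℝ), ∫ r₁ in (0:ℝ)..(r₂ / r),
      p * (2 * π * lam) ^ 2 * r₁ * r₂ * Real.exp (-(lam * π * (1 - p) * r₁ ^ 2)) *
        Real.exp (-(p * lam * π * r₂ ^ 2))) = 1 - 1 / (1 + p * (r ^ 2 - 1)) := by
  suffices h : (∫ r₂ in Set.Ioi (0:ℝ), ∫ r₁ in (0:ℝ)..(r₂ / r),
      p * (2 * π * lam) ^ 2 * r₁ * r₂ * Real.exp (-(lam * π * (1 - p) * r₁ ^ 2)) *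
        Real.exp (-(p * lam * π * r₂ ^ 2))) = 1 / (1 + p * (r ^ 2 - 1)) from ⟨h, by rw [h]⟩
  have hr0 : 0 < r := by linarith
  have ha : 0 ≤ lam * π * (1 - p) := mul_nonneg (by positivity) (by linarith)
  have hb : 0 < p * lam * π := by positivity
  have hinner (t : ℝ) : (∫ s in (0:ℝ)..(t / r),
      p * (2 * π * lam) ^ 2 * s * t * Real.exp (-(lam * π * (1 - p) * s ^ 2)) *
        Real.exp (-(p * lam * π * t ^ 2)))
      = p * (2 * π * lam) ^ 2 *
        (t * Real.exp (-(p * lam * π * t ^ 2)) * innerMoment (lam * π * (1 - p)) r t) := by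
    rw [innerMoment, ← mul_assoc, ← intervalIntegral.integral_const_mul]
    refine intervalIntegral.integral_congr fun s _ => ?_
    ring
  simp_rw [hinner]
  rw [MeasureTheory.integral_const_mul, integral_innerMoment ha hb hr0]
  have hq : 0 < 1 + p * (r ^ 2 - 1) := by
    have : 0 ≤ p * (r ^ 2 - 1) := mul_nonneg hp0.le (by nlinarith)
    linarith
  have hD : lam * π * (1 - p) + p * lam * π * r ^ 2 = lam * π * (1 + p * (r ^ 2 - 1)) := by ring
  rw [hD]
  field_simp
  ring
end

section
/- For every p with 0 < p < 1, the mean of the distance ratio R satisfies E[R] = 1 + ∫₁^∞ dr / (1 + p(r² − 1)) = 1 + (1/√(p(1−p))) · (π/2 − arctan(√p / √(1−p))). -/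
/-!
Put `a = √p` and `b = √(1 - p)`. The denominator `1 + p (r² - 1)` equals `b² + a² r²`, so
`r ↦ (1 / (a b)) arctan ((a / b) r)` is an antiderivative of the integrand. It tends to
`(1 / (a b)) (π / 2)` at infinity, and since the integrand is nonnegative the existence of this
limit already gives integrability, so the fundamental theorem of calculus on `(1, ∞)` applies
(`integral_Ioi_of_hasDerivAt_of_nonneg'`).
-/

open MeasureTheory Real Set

/-- Mean of the distance ratio `R` as a function of the thinning probability `p ∈ (0,1)`:
`E[R] = 1 + ∫₁^∞ 1/(1 + p (r² - 1)) dr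
      = 1 + (1/√(p(1-p))) (π/2 - arctan(√p/√(1-p)))`. -/
theorem mean_distance_ratio (p : ℝ) (hp0 : 0 < p) (hp1 : p < 1) :
    1 + (∫ r in Set.Ioi (1:ℝ), 1 / (1 + p * (r ^ 2 - 1))) =
      1 + (1 / Real.sqrt (p * (1 - p))) *
        (π / 2 - Real.arctan (Real.sqrt p / Real.sqrt (1 - p))) := by
  have ha : 0 < √p := Real.sqrt_pos.2 hp0
  have hb : 0 < √(1 - p) := Real.sqrt_pos.2 (by linarith)
  have ha2 : √p ^ 2 = p := Real.sq_sqrt hp0.le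
  have hb2 : √(1 - p) ^ 2 = 1 - p := Real.sq_sqrt (by linarith)
  rw [Real.sqrt_mul hp0.le]
  set a := √p
  set b := √(1 - p)
  have hden (r : ℝ) : 1 + p * (r ^ 2 - 1) = b ^ 2 + a ^ 2 * r ^ 2 := by
    rw [ha2, hb2]; ring
  have hderiv : ∀ r ∈ Ici (1 : ℝ), HasDerivAt (fun r => 1 / (a * b) * arctan (a / b * r))
      (1 / (1 + p * (r ^ 2 - 1))) r := by
    intro r _
    have h := (((hasDerivAt_id r).const_mul (a / b)).arctan).const_mul (1 / (a * b))
    refine h.congr_deriv ?_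
    have : b ^ 2 + a ^ 2 * r ^ 2 ≠ 0 := by positivity
    rw [hden, id]
    field_simp
  have hnonneg : ∀ r ∈ Ioi (1 : ℝ), 0 ≤ 1 / (1 + p * (r ^ 2 - 1)) := by
    intro r _
    rw [hden]
    positivity
  have hlim : Filter.Tendsto (fun r => 1 / (a * b) * arctan (a / b * r)) Filter.atTop
      (nhds (1 / (a * b) * (π / 2))) :=
    ((tendsto_nhds_of_tendsto_nhdsWithin tendsto_arctan_atTop).comp
      (Filter.tendsto_id.const_mul_atTop (div_pos ha hb))).const_mul _
  rw [integral_Ioi_of_hasDerivAt_of_nonneg' hderiv hnonneg hlim, mul_one]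
  ring
end
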